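/- Let K ⊆ L be a finite extension of fields of characteristic zero, and assume the extension has no proper intermediate fields: every intermediate field F with K ⊆ F ⊆ L satisfies F = K or F = L. Then for any nonzero K-linear subspaces A and B of L, either AB = L (the span of the products is all of L), or dim_K(AB) ≥ dim_K(A) + dim_K(B) − 1. -/

import Mathlib

open Module

/-- The subalgebra of elements of `L` stabilizing the subspace `B`. -/
def stabSubalg {K L : Type*} [Field K] [Field L] [Algebra K L] (B : Submodule K L) :
    Subalgebra K L where
  carrier := {x | ∀ b ∈ B, x * b ∈ B}
  mul_mem' := by
    intro x y hx hy b hb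
    rw [mul_assoc]
    exact hx _ (hy _ hb)
  add_mem' := by
    intro x y hx hy b hb
    rw [add_mul]
    exact B.add_mem (hx _ hb) (hy _ hb)
  algebraMap_mem' := by
    intro r b hb
    rw [← Algebra.smul_def]
    exact B.smul_mem r hb

theorem finrank_map_mulLeft {K L : Type*} [Field K] [Field L] [Algebra K L]
    (A : Submodule K L) {e : L} (he : e ≠ 0) :
    finrank K (A.map (LinearMap.mulLeft K e)) = finrank K A :=
  (Submodule.equivMapOfInjective (LinearMap.mulLeft K e)
    (mul_right_injective₀ he) A).finrank_eq.symm

theorem stmt2_aux {K L : Type*} [Field K] [Field L] [Algebra K L] [FiniteDimensional K L]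
    (hprim : ∀ F : IntermediateField K L, F = ⊥ ∨ F = ⊤) (n : ℕ) :
    ∀ (A B : Submodule K L), finrank K A = n → A ≠ ⊥ → B ≠ ⊥ →
    ((A * B : Submodule K L) = ⊤ ∨
      finrank K A + finrank K B ≤ finrank K (A * B : Submodule K L) + 1) := by
  induction n using Nat.strong_induction_on with
  | _ n ih =>
  intro A B hn hA hB
  by_cases hex : ∃ e : L, e ≠ 0 ∧ A ⊓ B.comap (LinearMap.mulLeft K e) ≠ ⊥ ∧
      A ⊓ B.comap (LinearMap.mulLeft K e) ≠ A
  · obtain ⟨e, he, h1, h2⟩ := hex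
    set A' := A ⊓ B.comap (LinearMap.mulLeft K e) with hA'
    set B' := B ⊔ A.map (LinearMap.mulLeft K e) with hB'
    have hlt : finrank K A' < n := by
      rw [← hn]
      exact Submodule.finrank_lt_finrank_of_lt (lt_of_le_of_ne inf_le_left h2)
    have hB'0 : B' ≠ ⊥ := fun h => hB (le_bot_iff.1 (h ▸ le_sup_left))
    have hle : A' * B' ≤ A * B := by
      rw [hB', Submodule.mul_sup]
      refine sup_le (mul_le_mul' inf_le_left le_rfl) ?_
      rw [Submodule.mul_le]
      rintro x hx _ ⟨a, ha, rfl⟩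
      have hxb : e * x ∈ B := hx.2
      have : x * (LinearMap.mulLeft K e) a = a * (e * x) := by
        simp only [LinearMap.mulLeft_apply]; ring
      rw [this]
      exact Submodule.mul_mem_mul ha hxb
    have hmap : A'.map (LinearMap.mulLeft K e) = B ⊓ A.map (LinearMap.mulLeft K e) := by
      ext x
      constructor
      · rintro ⟨y, hy, rfl⟩
        exact ⟨hy.2, y, hy.1, rfl⟩
      · rintro ⟨hx, y, hy, rfl⟩
        exact ⟨y, ⟨hy, hx⟩, rfl⟩
    have hdim := Submodule.finrank_sup_add_finrank_inf_eq B (A.map (LinearMap.mulLeft K e))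
    rw [← hmap, finrank_map_mulLeft A' he, finrank_map_mulLeft A he, ← hB'] at hdim
    rcases ih _ hlt A' B' rfl h1 hB'0 with h | h
    · left
      exact top_le_iff.1 (h ▸ hle)
    · right
      have := Submodule.finrank_mono hle
      omega
  · push Not at hex
    obtain ⟨a, ha, ha0⟩ := Submodule.exists_mem_ne_zero_of_ne_bot hA
    obtain ⟨b, hb, hb0⟩ := Submodule.exists_mem_ne_zero_of_ne_bot hB
    have hstab : ∀ x ∈ A, x / a ∈ stabSubalg B := by
      intro x hx c hc
      by_cases hc0 : c = 0
      · simp [hc0]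
      have hmem : a ∈ A ⊓ B.comap (LinearMap.mulLeft K (c / a)) := by
        refine ⟨ha, ?_⟩
        change c / a * a ∈ B
        rwa [div_mul_cancel₀ _ ha0]
      have heq := hex (c / a) (div_ne_zero hc0 ha0) (by
        intro h
        rw [h] at hmem
        exact ha0 ((Submodule.mem_bot K).1 hmem))
      have hx' : x ∈ A ⊓ B.comap (LinearMap.mulLeft K (c / a)) := by rw [heq]; exact hx
      have h3 : c / a * x ∈ B := hx'.2
      have h4 : x / a * c = c / a * x := by ring
      rw [h4]; exact h3
    have hfield : IsField (stabSubalg B) := Subalgebra.isField_of_algebraic _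
    have hF : ∀ x, x ∈ (stabSubalg B).toIntermediateField' hfield ↔ x ∈ stabSubalg B :=
      fun x => Iff.rfl
    rcases hprim ((stabSubalg B).toIntermediateField' hfield) with h | h
    · right
      have hA1 : finrank K A ≤ 1 := by
        have : A ≤ K ∙ a := by
          intro x hx
          have h5 := (hF _).2 (hstab x hx)
          rw [h, IntermediateField.mem_bot] at h5
          obtain ⟨k, hk⟩ := h5
          rw [Submodule.mem_span_singleton]
          refine ⟨k, ?_⟩
          rw [Algebra.smul_def, hk, div_mul_cancel₀ _ ha0]
        exact (Submodule.finrank_mono this).trans (finrank_span_singleton ha0).le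
      have hB1 : finrank K B ≤ finrank K (A * B : Submodule K L) := by
        rw [← finrank_map_mulLeft B ha0]
        apply Submodule.finrank_mono
        rintro _ ⟨c, hc, rfl⟩
        exact Submodule.mul_mem_mul ha hc
      omega
    · left
      have hBtop : ∀ x, x ∈ B := by
        intro x
        have h6 : x / b ∈ stabSubalg B := (hF _).1 (h ▸ IntermediateField.mem_top)
        have h7 : x / b * b ∈ B := h6 b hb
        rwa [div_mul_cancel₀ _ hb0] at h7
      rw [eq_top_iff]
      intro x _
      have := Submodule.mul_mem_mul ha (hBtop (x / a))
      rwa [mul_div_cancel₀ _ ha0] at this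

/-- If the finite extension `L/K` (characteristic zero) has no proper intermediate fields,
then for nonzero `K`-subspaces `A, B` of `L`, either `A*B = L` or
`dim (A*B) ≥ dim A + dim B - 1`. -/
theorem stmt2 {K L : Type*} [Field K] [Field L] [Algebra K L] [FiniteDimensional K L]
    [CharZero K] (hprim : ∀ F : IntermediateField K L, F = ⊥ ∨ F = ⊤)
    (A B : Submodule K L) (hA : A ≠ ⊥) (hB : B ≠ ⊥) :
    (A * B : Submodule K L) = ⊤ ∨
      finrank K A + finrank K B ≤ finrank K (A * B : Submodule K L) + 1 := by
  exact stmt2_aux hprim _ A B rfl hA hB
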